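/- Let p be an odd prime, G a finite powerful p-group, i ≥ 1 and j ≥ 0. Then [(Ω_i(G^{p²}))^{p^j}, Ω_i(G^p)] ≤ (Ω_i(G^{p²}))^{p^{j+2}}. -/

import Mathlib

/-- The subgroup generated by the `n`-th powers of the elements of `H`. -/
def subgroupPow {G : Type*} [Group G] (H : Subgroup G) (n : ℕ) : Subgroup G :=
  Subgroup.closure {x | ∃ h ∈ H, h ^ n = x}

/-- `Ω_i(H)`: the subgroup generated by the elements of `H` whose order divides `p ^ i`. -/
def omegaSubgroup {G : Type*} [Group G] (p i : ℕ) (H : Subgroup G) : Subgroup G :=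
  Subgroup.closure {x | x ∈ H ∧ x ^ p ^ i = 1}

/-- A finite `p`-group `G` is powerful if `[G,G] ≤ G^p` when `p` is odd,
and `[G,G] ≤ G^4` when `p = 2`. -/
def IsPowerful (p : ℕ) (G : Type*) [Group G] : Prop :=
  if p = 2 then commutator G ≤ subgroupPow (⊤ : Subgroup G) 4
  else commutator G ≤ subgroupPow (⊤ : Subgroup G) p

/-- The subgroup of `n`-th powers of the whole group is normal (indeed characteristic). -/
instance subgroupPow_top_normal {G : Type*} [Group G] (n : ℕ) :
    (subgroupPow (⊤ : Subgroup G) n).Normal := by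
  constructor
  intro x hx g
  have key : Subgroup.map (MulAut.conj g).toMonoidHom (subgroupPow (⊤ : Subgroup G) n)
      ≤ subgroupPow (⊤ : Subgroup G) n := by
    rw [subgroupPow, MonoidHom.map_closure]
    apply Subgroup.closure_le _ |>.mpr
    rintro y ⟨z, ⟨h, -, rfl⟩, rfl⟩
    exact Subgroup.subset_closure ⟨(MulAut.conj g) h, trivial, by
      simp [((MulAut.conj g).toMonoidHom.map_pow h n).symm]⟩
  have hmem : (MulAut.conj g) x ∈
      Subgroup.map (MulAut.conj g).toMonoidHom (subgroupPow (⊤ : Subgroup G) n) :=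
    Subgroup.mem_map_of_mem _ hx
  simpa [MulAut.conj_apply] using key hmem

/-- A powerfully central chain `{1} = H 0 ≤ H 1 ≤ ⋯ ≤ H n = G` of length `n`:
`[H (k+1), G] ≤ (H k)^p` for all `k < n`. -/
def IsPowerfullyCentralChain (p : ℕ) {G : Type*} [Group G] (n : ℕ) (H : ℕ → Subgroup G) : Prop :=
  H 0 = ⊥ ∧ H n = ⊤ ∧ (∀ k, k < n → H k ≤ H (k + 1)) ∧
    ∀ k, k < n → ⁅H (k + 1), (⊤ : Subgroup G)⁆ ≤ subgroupPow (H k) p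

/-- A group is powerfully nilpotent if it is powerful and admits a powerfully central chain. -/
def IsPowerfullyNilpotent (p : ℕ) (G : Type*) [Group G] : Prop :=
  IsPowerful p G ∧ ∃ (n : ℕ) (H : ℕ → Subgroup G), IsPowerfullyCentralChain p n H

/-- The powerful nilpotency class: the least possible length of a powerfully central chain. -/
noncomputable def powerfulNilpotencyClass (p : ℕ) (G : Type*) [Group G] : ℕ :=
  sInf {n | ∃ H : ℕ → Subgroup G, IsPowerfullyCentralChain p n H}

/-!
The elements of `G ^ (p ^ m)` of order dividing `p ^ i` are the powers `a ^ (p ^ m)` with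
`a ^ (p ^ (m + i)) = 1`, so everything reduces to a bound (Fernández-Alcober) for the order of
`[a ^ (p ^ j), b ^ (p ^ k)]` in terms of the orders of `a` and `b`: if `a ^ (p ^ (i + 1)) = 1` and
`b ^ (p ^ i) = 1`, this order divides `p ^ (i - j - k)`. As `[a ^ (p ^ j), b ^ (p ^ k)]` is also a
`p ^ (j + k + 1)`-th power, the bound gives a root of controlled order.

The bound is proved together with the fact that a product of elements of order dividing `p ^ n` has
order dividing `p ^ n`, by induction on `|G|`. The latter is known for the proper subgroups
`⟨y⟩ G ^ p`, whence the order of `[x, y]` divides that of `y`. For fixed `G` the bound follows by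
descending induction on `i`, as it is trivial for large `i`: with `c = a ^ (p ^ j)` and
`y = b ^ (p ^ k)`, the double commutator `[c, [c, y]]` lies so deep in the power series that it is a
`p ^ r`-th power with `r` large, and the bounds for larger indices make it central in `⟨c, [c, y]⟩`
modulo the elements of `G ^ p` of small order. There `[c ^ p, y]` is the product of
`[c, [c, y]] ^ (p choose 2)` and `[c, y] ^ p`, and `p` divides `p choose 2`.
-/

open scoped commutatorElement

section CommutatorFormulas

variable {G : Type*} [Group G] {n : ℕ} {x y : G}

theorem commutatorElement_pow_left (hx : Commute ⁅x, ⁅x, y⁆⁆ x)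
    (hxy : Commute ⁅x, ⁅x, y⁆⁆ ⁅x, y⁆) (n : ℕ) :
    ⁅x ^ n, y⁆ = ⁅x, ⁅x, y⁆⁆ ^ n.choose 2 * ⁅x, y⁆ ^ n := by
  set u := ⁅x, y⁆
  set v := ⁅x, u⁆
  have conj_u : x * u * x⁻¹ = v * u := conj_eq_commutatorElement_mul
  have conj_v : x * v * x⁻¹ = v := by rw [← hx.eq, mul_inv_cancel_right]
  induction n with
  | zero => simp
  | succ n ih =>
    calc ⁅x ^ (n + 1), y⁆ = x * (v ^ n.choose 2 * u ^ n) * x⁻¹ * u := by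
          rw [pow_succ', commutatorElement_mul_left_eq_conj_mul, ih]
      _ = v ^ n.choose 2 * (v * u) ^ n * u := by
          rw [← conj_mul, ← conj_pow, ← conj_pow, conj_u, conj_v]
      _ = v ^ (n + 1).choose 2 * u ^ (n + 1) := by
          rw [hxy.mul_pow, Nat.choose_succ_succ' n 1, Nat.choose_one_right, add_comm n, pow_add,
            pow_succ u]
          simp only [mul_assoc]

theorem mul_pow_of_commute_commutatorElement (hx : Commute ⁅y, x⁆ x) (hy : Commute ⁅y, x⁆ y)
    (n : ℕ) : (x * y) ^ n = x ^ n * y ^ n * ⁅y, x⁆ ^ n.choose 2 := by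
  have swap (n : ℕ) : y ^ n * x = x * y ^ n * ⁅y, x⁆ ^ n := by
    have h : ⁅y ^ n, x⁆ = ⁅y, x⁆ ^ n := by
      have trivial_comm : ⁅y, ⁅y, x⁆⁆ = 1 := hy.symm.commutator_eq
      simpa [trivial_comm] using
        commutatorElement_pow_left (x := y) (y := x) (by simp [trivial_comm])
          (by simp [trivial_comm]) n
    rw [((hx.mul_right (hy.pow_right n)).pow_left n).symm.eq, ← h, commutatorElement_def]
    group
  induction n with
  | zero => simp
  | succ n ih =>
    have hxy : Commute (⁅y, x⁆ ^ n.choose 2) (x * y) := (hx.mul_right hy).pow_left _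
    calc (x * y) ^ (n + 1) = x ^ n * y ^ n * (⁅y, x⁆ ^ n.choose 2 * (x * y)) := by
          rw [pow_succ, ih, mul_assoc]
      _ = x ^ n * (y ^ n * x) * y * ⁅y, x⁆ ^ n.choose 2 := by
          rw [hxy.eq]; simp only [mul_assoc]
      _ = x ^ n * x * y ^ n * (⁅y, x⁆ ^ n * y) * ⁅y, x⁆ ^ n.choose 2 := by
          rw [swap]; simp only [mul_assoc]
      _ = x ^ (n + 1) * y ^ (n + 1) * ⁅y, x⁆ ^ (n + 1).choose 2 := by
          rw [(hy.pow_left n).eq, Nat.choose_succ_succ' n 1, Nat.choose_one_right,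
            pow_add ⁅y, x⁆, pow_succ x, pow_succ y]
          simp only [mul_assoc]

theorem dvd_choose_two_of_odd (hn : Odd n) : n ∣ n.choose 2 := by
  obtain ⟨m, rfl⟩ := hn
  exact ⟨m, by rw [Nat.choose_two_right, Nat.add_sub_cancel, mul_left_comm,
    Nat.mul_div_cancel_left _ two_pos]⟩

theorem mul_pow_of_odd (hn : Odd n) (hpow : ⁅y, x⁆ ^ n = 1) (hx : Commute ⁅y, x⁆ x)
    (hy : Commute ⁅y, x⁆ y) : (x * y) ^ n = x ^ n * y ^ n := by
  obtain ⟨m, hm⟩ := dvd_choose_two_of_odd hn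
  rw [mul_pow_of_commute_commutatorElement hx hy, hm, pow_mul, hpow, one_pow, mul_one]

theorem commute_pow_left_of_odd (hn : Odd n) (hpow : ⁅x, y⁆ ^ n = 1)
    (hx : Commute ⁅x, ⁅x, y⁆⁆ x) (hxy : Commute ⁅x, ⁅x, y⁆⁆ ⁅x, y⁆) : Commute (x ^ n) y := by
  have hpow' : ⁅x, ⁅x, y⁆⁆ ^ n = 1 := by
    have conj_eq : x * ⁅x, y⁆ * x⁻¹ = ⁅x, ⁅x, y⁆⁆ * ⁅x, y⁆ := conj_eq_commutatorElement_mul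
    have h : (x * ⁅x, y⁆ * x⁻¹) ^ n = 1 := by rw [conj_pow, hpow, mul_one, mul_inv_cancel]
    rwa [conj_eq, hxy.mul_pow, hpow, mul_one] at h
  obtain ⟨m, hm⟩ := dvd_choose_two_of_odd hn
  rw [← commutatorElement_eq_one_iff_commute, commutatorElement_pow_left hx hxy, hm, pow_mul,
    hpow', hpow, one_pow, mul_one]

end CommutatorFormulas

section CommutatorsModuloNormal

variable {G : Type*} [Group G] {W : Subgroup G} [W.Normal] {n : ℕ} {x y : G}

theorem mk_commutatorElement (x y : G) : ((⁅x, y⁆ : G) : G ⧸ W) = ⁅(x : G ⧸ W), (y : G ⧸ W)⁆ :=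
  map_commutatorElement (QuotientGroup.mk' W) x y

theorem commutatorElement_mem_iff_commute_mk :
    ⁅x, y⁆ ∈ W ↔ Commute (x : G ⧸ W) (y : G ⧸ W) := by
  rw [← QuotientGroup.eq_one_iff, mk_commutatorElement, commutatorElement_eq_one_iff_commute]

theorem mk_mul_pow_of_odd (hn : Odd n) (hpow : ⁅y, x⁆ ^ n ∈ W) (hx : ⁅⁅y, x⁆, x⁆ ∈ W)
    (hy : ⁅⁅y, x⁆, y⁆ ∈ W) :
    ((x * y : G) : G ⧸ W) ^ n = (x : G ⧸ W) ^ n * (y : G ⧸ W) ^ n := by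
  rw [← QuotientGroup.eq_one_iff, QuotientGroup.mk_pow] at hpow
  rw [commutatorElement_mem_iff_commute_mk] at hx hy
  rw [mk_commutatorElement] at hpow hx hy
  exact mul_pow_of_odd hn hpow hx hy

theorem commutatorElement_pow_left_mem_of_odd (hn : Odd n) (hpow : ⁅x, y⁆ ^ n ∈ W)
    (hx : ⁅⁅x, ⁅x, y⁆⁆, x⁆ ∈ W) (hxy : ⁅⁅x, ⁅x, y⁆⁆, ⁅x, y⁆⁆ ∈ W) : ⁅x ^ n, y⁆ ∈ W := by
  rw [← QuotientGroup.eq_one_iff, QuotientGroup.mk_pow] at hpow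
  rw [commutatorElement_mem_iff_commute_mk] at hx hxy ⊢
  simp only [mk_commutatorElement] at hpow hx hxy
  exact commute_pow_left_of_odd hn hpow hx hxy

theorem closure_commutator_le {S : Set G} {H : Subgroup G} (h : ∀ s ∈ S, ∀ g ∈ H, ⁅s, g⁆ ∈ W) :
    ⁅Subgroup.closure S, H⁆ ≤ W := by
  rw [Subgroup.commutator_le]
  intro x hx g hg
  rw [commutatorElement_mem_iff_commute_mk]
  induction hx using Subgroup.closure_induction with
  | mem s hs => exact commutatorElement_mem_iff_commute_mk.1 (h s hs g hg)
  | one => exact Commute.one_left _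
  | mul x y _ _ hx hy => exact hx.mul_left hy
  | inv x _ hx => exact hx.inv_left

theorem sup_commutator_le {A B H : Subgroup G} (hA : ⁅A, H⁆ ≤ W) (hB : ⁅B, H⁆ ≤ W) :
    ⁅A ⊔ B, H⁆ ≤ W := by
  rw [Subgroup.sup_eq_closure]
  refine closure_commutator_le ?_
  rintro s (hs | hs) g hg
  · exact hA (Subgroup.commutator_mem_commutator hs hg)
  · exact hB (Subgroup.commutator_mem_commutator hs hg)

theorem zpowers_sup_commutator_self_le (y : G) (N : Subgroup G) [N.Normal] :
    ⁅Subgroup.zpowers y ⊔ N, Subgroup.zpowers y ⊔ N⁆ ≤ ⁅N, (⊤ : Subgroup G)⁆ := by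
  have hN (K : Subgroup G) : ⁅N, K⁆ ≤ ⁅N, (⊤ : Subgroup G)⁆ :=
    Subgroup.commutator_mono le_rfl le_top
  have hy : ⁅Subgroup.zpowers y, Subgroup.zpowers y⁆ = ⊥ :=
    Subgroup.commutator_self_eq_bot_iff.2 inferInstance
  refine sup_commutator_le ?_ (hN _)
  rw [Subgroup.commutator_comm]
  exact sup_commutator_le (hy.le.trans bot_le) (hN _)

/-- A Nakayama lemma: iterating the inclusion replaces `⁅A, ⊤⁆` by arbitrarily long commutators. -/
theorem le_of_le_sup_commutator_top [Group.IsNilpotent G] {A : Subgroup G}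
    (h : A ≤ W ⊔ ⁅A, (⊤ : Subgroup G)⁆) : A ≤ W := by
  have hle (n : ℕ) : A ≤ W ⊔ (⊤ : Subgroup G).lowerCentralSeries n := by
    induction n with
    | zero => exact le_top.trans le_sup_right
    | succ n ih =>
      refine h.trans (sup_le le_sup_left ((Subgroup.commutator_mono ih le_rfl).trans ?_))
      exact sup_commutator_le ((Subgroup.commutator_le_left W ⊤).trans le_sup_left) le_sup_right
  obtain ⟨n, hn⟩ := Subgroup.nilpotent_iff_lowerCentralSeries.1 ‹Group.IsNilpotent G›
  simpa only [hn, sup_bot_eq] using hle n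

end CommutatorsModuloNormal

section PowerSubgroups

variable {G : Type*} [Group G] {H K : Subgroup G} {n : ℕ} {x : G}

theorem pow_mem_subgroupPow (hx : x ∈ H) (n : ℕ) : x ^ n ∈ subgroupPow H n :=
  Subgroup.subset_closure ⟨x, hx, rfl⟩

theorem subgroupPow_le (H : Subgroup G) (n : ℕ) : subgroupPow H n ≤ H := by
  refine (Subgroup.closure_le _).2 ?_
  rintro _ ⟨x, hx, rfl⟩
  exact H.pow_mem hx n

theorem subgroupPow_mono (h : H ≤ K) (n : ℕ) : subgroupPow H n ≤ subgroupPow K n := by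
  refine Subgroup.closure_mono ?_
  rintro _ ⟨x, hx, rfl⟩
  exact ⟨x, h hx, rfl⟩

theorem map_subtype_subgroupPow (H : Subgroup G) (n : ℕ) :
    (subgroupPow (⊤ : Subgroup H) n).map H.subtype = subgroupPow H n := by
  rw [subgroupPow, MonoidHom.map_closure, subgroupPow]
  congr 1
  ext x
  constructor
  · rintro ⟨_, ⟨h, -, rfl⟩, rfl⟩
    exact ⟨h, h.2, rfl⟩
  · rintro ⟨h, hh, rfl⟩
    exact ⟨⟨h, hh⟩ ^ n, ⟨⟨h, hh⟩, trivial, rfl⟩, rfl⟩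

theorem normal_closure_of_conj_mem {S : Set G} (h : ∀ s ∈ S, ∀ g : G, g * s * g⁻¹ ∈ S) :
    (Subgroup.closure S).Normal := by
  rw [← Subgroup.normalizer_eq_top_iff, eq_top_iff]
  exact Subgroup.le_normalizer_closure_iff.2 fun g _ s hs => Subgroup.subset_closure (h s hs g)

instance subgroupPow_normal (H : Subgroup G) [hH : H.Normal] (n : ℕ) :
    (subgroupPow H n).Normal := by
  refine normal_closure_of_conj_mem ?_
  rintro _ ⟨x, hx, rfl⟩ g
  exact ⟨g * x * g⁻¹, hH.conj_mem x hx g, conj_pow⟩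

instance omegaSubgroup_normal (p i : ℕ) (H : Subgroup G) [hH : H.Normal] :
    (omegaSubgroup p i H).Normal := by
  refine normal_closure_of_conj_mem ?_
  rintro x ⟨hx, hxi⟩ g
  exact ⟨hH.conj_mem x hx g, by rw [conj_pow, hxi, mul_one, mul_inv_cancel]⟩

end PowerSubgroups

section PowerfullyEmbedded

variable {G : Type*} [Group G] {n : ℕ}

/-- `N` is powerfully embedded in `G` with respect to the exponent `n`: `[N, G] ≤ N ^ n`. The usual
notion for `p`-groups, `p` odd, is the case `n = p`. -/
def PowerfullyEmbedded (n : ℕ) (N : Subgroup G) : Prop :=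
  ⁅N, (⊤ : Subgroup G)⁆ ≤ subgroupPow N n

theorem PowerfullyEmbedded.commutatorElement_mem {N : Subgroup G} (hN : PowerfullyEmbedded n N)
    {x : G} (hx : x ∈ N) (g : G) : ⁅x, g⁆ ∈ subgroupPow N n :=
  hN (Subgroup.commutator_mem_commutator hx trivial)

theorem powerfullyEmbedded_subgroupPow [Group.IsNilpotent G] (hn : Odd n) {N : Subgroup G}
    [N.Normal] (hN : PowerfullyEmbedded n N) : PowerfullyEmbedded n (subgroupPow N n) := by
  refine le_of_le_sup_commutator_top (closure_commutator_le ?_)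
  rintro _ ⟨y, hy, rfl⟩ g -
  have hu : ⁅y, g⁆ ∈ subgroupPow N n := hN.commutatorElement_mem hy g
  have hv : ⁅y, ⁅y, g⁆⁆ ∈ ⁅subgroupPow N n, (⊤ : Subgroup G)⁆ := by
    rw [Subgroup.commutator_comm]
    exact Subgroup.commutator_mem_commutator trivial hu
  have hvz (z : G) : ⁅⁅y, ⁅y, g⁆⁆, z⁆ ∈ subgroupPow (subgroupPow N n) n ⊔
      ⁅⁅subgroupPow N n, (⊤ : Subgroup G)⁆, (⊤ : Subgroup G)⁆ :=
    Subgroup.mem_sup_right (Subgroup.commutator_mem_commutator hv trivial)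
  exact commutatorElement_pow_left_mem_of_odd hn
    (Subgroup.mem_sup_left (pow_mem_subgroupPow hu n)) (hvz _) (hvz _)

theorem PowerfullyEmbedded.zpowers_sup {N : Subgroup G} [N.Normal] (hN : PowerfullyEmbedded n N)
    (y : G) : ⁅Subgroup.zpowers y ⊔ N, Subgroup.zpowers y ⊔ N⁆ ≤
      subgroupPow (Subgroup.zpowers y ⊔ N) n :=
  (zpowers_sup_commutator_self_le y N).trans (hN.trans (subgroupPow_mono le_sup_right n))

end PowerfullyEmbedded

section PowerSeries

variable {n : ℕ} {G : Type*} [Group G]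

/-- The iterated power series `G, G ^ n, (G ^ n) ^ n, …`. Each term is controlled by the previous
one; that the `m`-th term is `G ^ (n ^ m)` is only known afterwards, for powerful groups. -/
def powSeries (n : ℕ) (G : Type*) [Group G] : ℕ → Subgroup G
  | 0 => ⊤
  | m + 1 => subgroupPow (powSeries n G m) n

instance powSeries_normal (n : ℕ) (G : Type*) [Group G] (m : ℕ) : (powSeries n G m).Normal := by
  induction m with
  | zero => exact Subgroup.normal_top
  | succ m ih => exact subgroupPow_normal _ n

theorem powSeries_antitone (n : ℕ) (G : Type*) [Group G] : Antitone (powSeries n G) :=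
  antitone_nat_of_succ_le fun _ => subgroupPow_le _ n

theorem pow_mem_powSeries {m : ℕ} {x : G} (hx : x ∈ powSeries n G m) (k : ℕ) :
    x ^ n ^ k ∈ powSeries n G (m + k) := by
  induction k with
  | zero => simpa only [pow_zero, pow_one, add_zero] using hx
  | succ k ih =>
    rw [pow_succ, pow_mul]
    exact pow_mem_subgroupPow ih n

theorem pow_mem_powSeries_top (n : ℕ) (x : G) (k : ℕ) : x ^ n ^ k ∈ powSeries n G k := by
  simpa only [zero_add] using pow_mem_powSeries (m := 0) (Subgroup.mem_top x) k

end PowerSeries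

/-- The standing assumption on a powerful `p`-group, `p` odd, in the generality of nilpotent groups
and odd exponents. -/
structure IsOddPowerful (n : ℕ) (G : Type*) [Group G] : Prop where
  odd : Odd n
  isNilpotent : Group.IsNilpotent G
  commutator_le : commutator G ≤ subgroupPow (⊤ : Subgroup G) n

namespace IsOddPowerful

variable {n : ℕ} {G : Type*} [Group G]

theorem of_commutator_self_le (hG : IsOddPowerful n G) {H : Subgroup G}
    (hH : ⁅H, H⁆ ≤ subgroupPow H n) : IsOddPowerful n H where
  odd := hG.odd
  isNilpotent := have := hG.isNilpotent; inferInstance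
  commutator_le := by
    rwa [← Subgroup.map_subtype_le_map_subtype, Subgroup.map_subtype_commutator,
      map_subtype_subgroupPow]

theorem powerfullyEmbedded_powSeries (hG : IsOddPowerful n G) (m : ℕ) :
    PowerfullyEmbedded n (powSeries n G m) := by
  have := hG.isNilpotent
  induction m with
  | zero => exact hG.commutator_le
  | succ m ih => exact powerfullyEmbedded_subgroupPow hG.odd ih

theorem commutator_powSeries_le (hG : IsOddPowerful n G) (a b : ℕ) :
    ⁅powSeries n G a, powSeries n G b⁆ ≤ powSeries n G (a + b + 1) := by
  induction a with
  | zero =>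
    rw [zero_add, Subgroup.commutator_comm]
    exact (Subgroup.commutator_mono le_rfl le_top).trans (hG.powerfullyEmbedded_powSeries b)
  | succ a ih =>
    rw [Nat.succ_add]
    refine closure_commutator_le ?_
    rintro _ ⟨y, hy, rfl⟩ g hg
    have hu : ⁅y, g⁆ ∈ powSeries n G (a + b + 1) :=
      ih (Subgroup.commutator_mem_commutator hy hg)
    have hv : ⁅y, ⁅y, g⁆⁆ ∈ powSeries n G (a + b + 1 + 1) := by
      rw [← commutatorElement_inv]
      exact inv_mem ((hG.powerfullyEmbedded_powSeries _).commutatorElement_mem hu y)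
    have hvz (z : G) : ⁅⁅y, ⁅y, g⁆⁆, z⁆ ∈ powSeries n G (a + b + 1 + 1) :=
      Subgroup.commutator_le_left _ ⊤ (Subgroup.commutator_mem_commutator hv trivial)
    exact commutatorElement_pow_left_mem_of_odd hG.odd (pow_mem_subgroupPow hu n) (hvz _) (hvz _)

theorem commutatorElement_mem_powSeries (hG : IsOddPowerful n G) {a b : ℕ} {x y : G}
    (hx : x ∈ powSeries n G a) (hy : y ∈ powSeries n G b) : ⁅x, y⁆ ∈ powSeries n G (a + b + 1) :=
  hG.commutator_powSeries_le a b (Subgroup.commutator_mem_commutator hx hy)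

theorem mk_mul_pow (hG : IsOddPowerful n G) {m : ℕ} (x : G) {y : G} (hy : y ∈ powSeries n G m) :
    ((x * y : G) : G ⧸ powSeries n G (m + 2)) ^ n =
      (x : G ⧸ powSeries n G (m + 2)) ^ n * (y : G ⧸ powSeries n G (m + 2)) ^ n := by
  have hc : ⁅y, x⁆ ∈ powSeries n G (m + 1) :=
    (hG.powerfullyEmbedded_powSeries m).commutatorElement_mem hy x
  exact mk_mul_pow_of_odd hG.odd (pow_mem_subgroupPow hc n)
    ((hG.powerfullyEmbedded_powSeries _).commutatorElement_mem hc x)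
    ((hG.powerfullyEmbedded_powSeries _).commutatorElement_mem hc y)

theorem exists_mk_eq_pow (hG : IsOddPowerful n G) {m : ℕ} {g : G}
    (hg : g ∈ powSeries n G (m + 1)) :
    ∃ y ∈ powSeries n G m,
      (g : G ⧸ powSeries n G (m + 2)) = (y : G ⧸ powSeries n G (m + 2)) ^ n := by
  let powHom : powSeries n G m →* G ⧸ powSeries n G (m + 2) :=
    { toFun := fun y => ((y : G) : G ⧸ powSeries n G (m + 2)) ^ n
      map_one' := one_pow n
      map_mul' := fun x y => hG.mk_mul_pow x y.2 }
  have hle : powSeries n G (m + 1) ≤ powHom.range.comap (QuotientGroup.mk' _) := by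
    refine (Subgroup.closure_le _).2 ?_
    rintro _ ⟨y, hy, rfl⟩
    exact ⟨⟨y, hy⟩, rfl⟩
  obtain ⟨⟨y, hy⟩, hyg⟩ := hle hg
  exact ⟨y, hy, hyg.symm⟩

/-- Successive approximation: the error term descends along the power series, which reaches the
trivial group. -/
theorem exists_pow_eq (hG : IsOddPowerful n G) (hbot : ∃ e, powSeries n G e = ⊥) {m : ℕ} {g : G}
    (hg : g ∈ powSeries n G (m + 1)) : ∃ x ∈ powSeries n G m, x ^ n = g := by
  have approx (k : ℕ) : ∃ x ∈ powSeries n G m, (x ^ n)⁻¹ * g ∈ powSeries n G (m + k + 1) := by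
    induction k with
    | zero => exact ⟨1, one_mem _, by simpa only [one_pow, inv_one, one_mul] using hg⟩
    | succ k ih =>
      obtain ⟨x, hx, hxg⟩ := ih
      obtain ⟨y, hy, hyg⟩ := hG.exists_mk_eq_pow hxg
      refine ⟨x * y, mul_mem hx (powSeries_antitone n G (Nat.le_add_right m k) hy), ?_⟩
      rw [← add_assoc, ← QuotientGroup.eq, QuotientGroup.mk_pow, hG.mk_mul_pow x hy, ← hyg,
        QuotientGroup.mk_mul, QuotientGroup.mk_inv, QuotientGroup.mk_pow, mul_inv_cancel_left]
  obtain ⟨e, he⟩ := hbot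
  obtain ⟨x, hx, hxg⟩ := approx e
  have htriv := powSeries_antitone n G (show e ≤ m + e + 1 by lia) hxg
  rw [he, Subgroup.mem_bot, inv_mul_eq_one] at htriv
  exact ⟨x, hx, htriv⟩

theorem exists_pow_pow_eq (hG : IsOddPowerful n G) (hbot : ∃ e, powSeries n G e = ⊥) {m : ℕ}
    {g : G} (hg : g ∈ powSeries n G m) : ∃ x : G, x ^ n ^ m = g := by
  induction m generalizing g with
  | zero => exact ⟨g, by rw [pow_zero, pow_one]⟩
  | succ m ih =>
    obtain ⟨y, hy, rfl⟩ := hG.exists_pow_eq hbot hg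
    obtain ⟨x, rfl⟩ := ih hy
    exact ⟨x, by rw [pow_succ, pow_mul]⟩

theorem subgroupPow_top_pow_eq_powSeries (hG : IsOddPowerful n G)
    (hbot : ∃ e, powSeries n G e = ⊥) (m : ℕ) :
    subgroupPow (⊤ : Subgroup G) (n ^ m) = powSeries n G m := by
  refine le_antisymm ((Subgroup.closure_le _).2 ?_) fun g hg => ?_
  · rintro _ ⟨x, -, rfl⟩
    exact pow_mem_powSeries_top n x m
  · obtain ⟨x, rfl⟩ := hG.exists_pow_pow_eq hbot hg
    exact pow_mem_subgroupPow (Subgroup.mem_top x) _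

end IsOddPowerful

section FinitePGroup

variable {p : ℕ} [Fact p.Prime] {G : Type*} [Group G] [Finite G] {H : Subgroup G}

theorem exists_normal_index_eq_prime (hpG : IsPGroup p G) (hH : H ≠ ⊤) :
    ∃ K : Subgroup G, H ≤ K ∧ K.Normal ∧ K.index = p := by
  have hp : p.Prime := Fact.out
  obtain ⟨n, hn⟩ := IsPGroup.iff_card.1 hpG
  obtain ⟨k, hk⟩ := IsPGroup.iff_card.1 (hpG.to_subgroup H)
  have hlt : k < n := by
    rw [← Nat.pow_lt_pow_iff_right hp.one_lt, ← hk, ← hn]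
    exact lt_of_le_of_ne H.card_le_card_group fun h => hH (H.eq_top_of_card_eq h)
  obtain ⟨m, rfl⟩ := Nat.exists_eq_add_one_of_ne_zero hlt.ne_bot
  obtain ⟨K, hK, hHK⟩ := Sylow.exists_subgroup_card_pow_prime_le p
    (hn ▸ pow_dvd_pow p m.le_succ) H hk (Nat.lt_succ_iff.1 hlt)
  have hindex : K.index = p := by
    have h := K.card_mul_index
    rw [hK, hn, pow_succ] at h
    exact Nat.eq_of_mul_eq_mul_left (pow_pos hp.pos m) h
  refine ⟨K, hHK, Subgroup.normal_of_index_eq_minFac_card ?_, hindex⟩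
  rw [hindex, hn, hp.pow_minFac m.succ_ne_zero]

theorem sup_subgroupPow_ne_top (hpG : IsPGroup p G) (hH : H ≠ ⊤) : H ⊔ subgroupPow ⊤ p ≠ ⊤ := by
  obtain ⟨K, hHK, hK, hindex⟩ := exists_normal_index_eq_prime hpG hH
  have hpow : subgroupPow ⊤ p ≤ K := by
    refine (Subgroup.closure_le _).2 ?_
    rintro _ ⟨x, -, rfl⟩
    exact hindex ▸ K.pow_index_mem x
  refine ne_top_of_le_ne_top (fun htop => ?_) (sup_le hHK hpow)
  rw [htop, Subgroup.index_top] at hindex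
  exact (Fact.out : p.Prime).one_lt.ne hindex

theorem subgroupPow_lt (hpG : IsPGroup p G) (hH : H ≠ ⊥) : subgroupPow H p < H := by
  refine lt_of_le_of_ne (subgroupPow_le H p) fun h => ?_
  have := (Subgroup.nontrivial_iff_ne_bot H).2 hH
  apply sup_subgroupPow_ne_top (hpG.to_subgroup H) bot_ne_top
  apply Subgroup.map_injective H.subtype_injective
  rw [bot_sup_eq, map_subtype_subgroupPow, h, ← MonoidHom.range_eq_map, H.range_subtype]

theorem exists_powSeries_eq_bot (hpG : IsPGroup p G) : ∃ m, powSeries p G m = ⊥ := by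
  by_contra! hne
  have hanti : StrictAnti (powSeries p G) :=
    strictAnti_nat_of_succ_lt fun m => subgroupPow_lt hpG (hne m)
  exact not_injective_infinite_finite _ hanti.injective

end FinitePGroup

section Torsion

variable {p : ℕ} {G : Type*} [Group G] {H : Subgroup G}

/-- The elements of `H` of order dividing `p ^ n` are closed under products, for every `n`;
equivalently, every `Ω_n(H)` has exponent dividing `p ^ n`. -/
def TorsionMulClosed (p : ℕ) (H : Subgroup G) : Prop :=
  ∀ n, ∀ x ∈ H, ∀ y ∈ H, x ^ p ^ n = 1 → y ^ p ^ n = 1 → (x * y) ^ p ^ n = 1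

theorem TorsionMulClosed.mono {K : Subgroup G} (hK : TorsionMulClosed p K) (h : H ≤ K) :
    TorsionMulClosed p H :=
  fun n _ hx _ hy => hK n _ (h hx) _ (h hy)

theorem TorsionMulClosed.of_top (hH : TorsionMulClosed p (⊤ : Subgroup H)) :
    TorsionMulClosed p H := fun n x hx y hy hxn hyn =>
  congrArg Subtype.val
    (hH n ⟨x, hx⟩ trivial ⟨y, hy⟩ trivial (Subtype.ext hxn) (Subtype.ext hyn))

theorem mem_omegaSubgroup_iff (hH : TorsionMulClosed p H) {i : ℕ} {x : G} :
    x ∈ omegaSubgroup p i H ↔ x ∈ H ∧ x ^ p ^ i = 1 := by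
  refine ⟨fun hx => ?_, fun hx => Subgroup.subset_closure hx⟩
  induction hx using Subgroup.closure_induction with
  | mem _ hx => exact hx
  | one => exact ⟨one_mem _, one_pow _⟩
  | mul x y _ _ hx hy => exact ⟨mul_mem hx.1 hy.1, hH i x hx.1 y hy.1 hx.2 hy.2⟩
  | inv x _ hx => exact ⟨inv_mem hx.1, by rw [inv_pow, hx.2, inv_one]⟩

theorem pow_prime_pow_eq_one_mono {m n : ℕ} (h : m ≤ n) {x : G} (hx : x ^ p ^ m = 1) :
    x ^ p ^ n = 1 :=
  orderOf_dvd_iff_pow_eq_one.1 ((orderOf_dvd_of_pow_eq_one hx).trans (pow_dvd_pow p h))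

theorem pow_mem_omegaSubgroup {t : ℕ} {x : G} (hx : x ^ p ^ (t + 1) = 1) :
    x ^ p ∈ omegaSubgroup p t (subgroupPow (⊤ : Subgroup G) p) :=
  Subgroup.subset_closure
    ⟨pow_mem_subgroupPow (Subgroup.mem_top x) p, by rw [← pow_mul, ← pow_succ', hx]⟩

/-- The induction hypothesis on `|G|`: every powerful proper subgroup is torsion closed. -/
def ProperTorsionMulClosed (p : ℕ) (G : Type*) [Group G] : Prop :=
  ∀ H : Subgroup G, H ≠ ⊤ → IsOddPowerful p H → TorsionMulClosed p H

/-- The order bound for commutators of powers: `[a ^ (p ^ j), b ^ (p ^ k)]` has order dividing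
`p ^ (i - j - k)` when `a ^ (p ^ (i + 1)) = 1` and `b ^ (p ^ i) = 1`. The truncated subtraction is
intended: the powers commute when `i ≤ j + k`. -/
def CommutatorBound (p : ℕ) (G : Type*) [Group G] (i : ℕ) : Prop :=
  ∀ (j k : ℕ) (a b : G), a ^ p ^ (i + 1) = 1 → b ^ p ^ i = 1 →
    ⁅a ^ p ^ j, b ^ p ^ k⁆ ^ p ^ (i - j - k) = 1

theorem commutatorBound_of_powSeries_eq_bot (hG : IsOddPowerful p G) {e i : ℕ}
    (he : powSeries p G e = ⊥) (hi : e ≤ i) : CommutatorBound p G i := by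
  intro j k a b _ _
  have hmem := pow_mem_powSeries (hG.commutatorElement_mem_powSeries
    (pow_mem_powSeries_top p a j) (pow_mem_powSeries_top p b k)) (i - j - k)
  have htriv := powSeries_antitone p G (show e ≤ j + k + 1 + (i - j - k) by lia) hmem
  rwa [he, Subgroup.mem_bot] at htriv

end Torsion

section CommutatorOrders

variable {p : ℕ} [Fact p.Prime] {G : Type*} [Group G] [Finite G]

theorem ProperTorsionMulClosed.subgroupPow_top (hT : ProperTorsionMulClosed p G)
    (hpG : IsPGroup p G) (hG : IsOddPowerful p G) :
    TorsionMulClosed p (subgroupPow (⊤ : Subgroup G) p) := by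
  rcases subsingleton_or_nontrivial G with _ | _
  · exact fun _ _ _ _ _ _ _ => Subsingleton.elim _ _
  · refine hT _ (subgroupPow_lt hpG top_ne_bot).ne (hG.of_commutator_self_le ?_)
    exact (Subgroup.commutator_mono le_rfl le_top).trans (hG.powerfullyEmbedded_powSeries 1)

/-- `⁅x, y⁆` is the product of the elements `x * y * x⁻¹` and `y⁻¹` of `⟨y⟩ G ^ p`, which is a
powerful subgroup, and a proper one unless `G` is cyclic. -/
theorem commutatorElement_pow_eq_one (hpG : IsPGroup p G) (hG : IsOddPowerful p G)
    (hT : ProperTorsionMulClosed p G) {n : ℕ} (x : G) {y : G} (hy : y ^ p ^ n = 1) :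
    ⁅x, y⁆ ^ p ^ n = 1 := by
  by_cases hcyclic : Subgroup.zpowers y = ⊤
  · obtain ⟨k, rfl⟩ := Subgroup.mem_zpowers_iff.1 (hcyclic ▸ Subgroup.mem_top x)
    rw [((Commute.refl y).zpow_left k).commutator_eq, one_pow]
  set H : Subgroup G := Subgroup.zpowers y ⊔ subgroupPow ⊤ p
  have hH : TorsionMulClosed p H := hT H (sup_subgroupPow_ne_top hpG hcyclic)
    (hG.of_commutator_self_le ((hG.powerfullyEmbedded_powSeries 1).zpowers_sup y))
  have hyH : y ∈ H := Subgroup.mem_sup_left (Subgroup.mem_zpowers y)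
  have hxyH : ⁅x, y⁆ ∈ H :=
    Subgroup.mem_sup_right ((hG.powerfullyEmbedded_powSeries 0).commutatorElement_mem trivial y)
  have hconj : x * y * x⁻¹ ∈ H := by
    simpa only [commutatorElement_def, inv_mul_cancel_right] using mul_mem hxyH hyH
  rw [commutatorElement_def]
  refine hH n _ hconj _ (inv_mem hyH) ?_ ?_
  · rw [conj_pow, hy, mul_one, mul_inv_cancel]
  · rw [inv_pow, hy, inv_one]

theorem CommutatorBound.commutatorElement_mem_omegaSubgroup {r t : ℕ}
    (hB : CommutatorBound p G (r + t)) (hpG : IsPGroup p G) (hG : IsOddPowerful p G) {x y : G}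
    (hx : x ∈ powSeries p G r) (hxt : x ^ p ^ (t + 1) = 1) (hyt : y ^ p ^ (r + t) = 1) :
    ⁅x, y⁆ ∈ omegaSubgroup p t (subgroupPow (⊤ : Subgroup G) p) := by
  obtain ⟨a, rfl⟩ := hG.exists_pow_pow_eq (exists_powSeries_eq_bot hpG) hx
  rw [← pow_mul, ← pow_add, ← add_assoc] at hxt
  have hbound := hB r 0 a y hxt hyt
  rw [pow_zero, pow_one, Nat.sub_zero, Nat.add_sub_cancel_left] at hbound
  exact Subgroup.subset_closure
    ⟨(hG.powerfullyEmbedded_powSeries 0).commutatorElement_mem trivial y, hbound⟩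

/-- The double commutator `⁅c, ⁅c, y⁆⁆` lies in the term `r = j + (j + k + 1) + 1` of the power
series, so by the bound for the index `r + t` it commutes with `c` and with `⁅c, y⁆` modulo the
elements of `G ^ p` of order dividing `p ^ t`. -/
theorem CommutatorBound.commutatorElement_pow_left_pow_eq_one {j k t : ℕ}
    (hB : CommutatorBound p G (j + (j + k + 1) + 1 + t)) (hpG : IsPGroup p G)
    (hG : IsOddPowerful p G) (hT : ProperTorsionMulClosed p G) {c y : G}
    (hc : c ∈ powSeries p G j) (hy : y ∈ powSeries p G k)
    (hct : c ^ p ^ (j + (j + k + 1) + 1 + t) = 1) (hcy : ⁅c, y⁆ ^ p ^ (t + 1) = 1) :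
    ⁅c ^ p, y⁆ ^ p ^ t = 1 := by
  have hu : ⁅c, y⁆ ∈ powSeries p G (j + k + 1) := hG.commutatorElement_mem_powSeries hc hy
  have hv : ⁅c, ⁅c, y⁆⁆ ∈ powSeries p G (j + (j + k + 1) + 1) :=
    hG.commutatorElement_mem_powSeries hc hu
  have hvt : ⁅c, ⁅c, y⁆⁆ ^ p ^ (t + 1) = 1 := commutatorElement_pow_eq_one hpG hG hT c hcy
  have hvz {z : G} (hz : z ^ p ^ (j + (j + k + 1) + 1 + t) = 1) :
      ⁅⁅c, ⁅c, y⁆⁆, z⁆ ∈ omegaSubgroup p t (subgroupPow (⊤ : Subgroup G) p) :=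
    hB.commutatorElement_mem_omegaSubgroup hpG hG hv hvt hz
  have hmem := commutatorElement_pow_left_mem_of_odd hG.odd (pow_mem_omegaSubgroup hcy) (hvz hct)
    (hvz (pow_prime_pow_eq_one_mono (by lia) hcy))
  exact ((mem_omegaSubgroup_iff (hT.subgroupPow_top hpG hG)).1 hmem).2

theorem commutatorBound_of_forall_gt (hpG : IsPGroup p G) (hG : IsOddPowerful p G)
    (hT : ProperTorsionMulClosed p G) {i : ℕ} (hB : ∀ i' > i, CommutatorBound p G i') :
    CommutatorBound p G i := by
  intro j k a b ha hb
  induction j with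
  | zero =>
    refine commutatorElement_pow_eq_one hpG hG hT _ ?_
    rw [← pow_mul, ← pow_add]
    exact pow_prime_pow_eq_one_mono (by lia) hb
  | succ j ih =>
    rw [pow_succ, pow_mul]
    rcases Nat.eq_zero_or_pos (i - j - k) with hzero | hpos
    · rw [hzero, pow_zero, pow_one, commutatorElement_eq_one_iff_commute] at ih
      rw [(ih.pow_left p).commutator_eq, one_pow]
    · obtain ⟨t, rfl⟩ : ∃ t, i = j + k + t + 1 := ⟨i - j - k - 1, by lia⟩
      rw [show j + k + t + 1 - j - k = t + 1 by lia] at ih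
      rw [show j + k + t + 1 - (j + 1) - k = t by lia]
      refine (hB (j + (j + k + 1) + 1 + t) (by lia)).commutatorElement_pow_left_pow_eq_one hpG hG hT
        (pow_mem_powSeries_top p a j) (pow_mem_powSeries_top p b k) ?_ ih
      rw [← pow_mul, ← pow_add]
      exact pow_prime_pow_eq_one_mono (by lia) ha

theorem commutatorBound_of_proper (hpG : IsPGroup p G) (hG : IsOddPowerful p G)
    (hT : ProperTorsionMulClosed p G) (i : ℕ) : CommutatorBound p G i := by
  obtain ⟨e, he⟩ := exists_powSeries_eq_bot hpG
  have descend (s : ℕ) : ∀ i, e ≤ i + s → CommutatorBound p G i := by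
    induction s with
    | zero => exact fun i hi => commutatorBound_of_powSeries_eq_bot hG he hi
    | succ s ih =>
      exact fun i hi => commutatorBound_of_forall_gt hpG hG hT fun i' hi' => ih i' (by lia)
  exact descend e i (Nat.le_add_left e i)

theorem torsionMulClosed_of_proper (hpG : IsPGroup p G) (hG : IsOddPowerful p G)
    (hT : ProperTorsionMulClosed p G) : TorsionMulClosed p (⊤ : Subgroup G) := by
  rintro (_ | t) x - y - hx hy
  · rw [pow_zero, pow_one] at hx hy ⊢
    rw [hx, hy, one_mul]
  have hc : ⁅y, x⁆ ∈ powSeries p G 1 :=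
    (hG.powerfullyEmbedded_powSeries 0).commutatorElement_mem trivial x
  have hct : ⁅y, x⁆ ^ p ^ (t + 1) = 1 := commutatorElement_pow_eq_one hpG hG hT y hx
  have hcz {z : G} (hz : z ^ p ^ (t + 1) = 1) :
      ⁅⁅y, x⁆, z⁆ ∈ omegaSubgroup p t (subgroupPow (⊤ : Subgroup G) p) :=
    (commutatorBound_of_proper hpG hG hT (1 + t)).commutatorElement_mem_omegaSubgroup hpG hG
      hc hct (add_comm t 1 ▸ hz)
  have hpow : (x * y) ^ p ∈ omegaSubgroup p t (subgroupPow (⊤ : Subgroup G) p) := by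
    have hxy := mk_mul_pow_of_odd hG.odd (pow_mem_omegaSubgroup hct) (hcz hx) (hcz hy)
    simp only [← QuotientGroup.mk_pow] at hxy
    rw [← QuotientGroup.eq_one_iff, hxy, (QuotientGroup.eq_one_iff _).2 (pow_mem_omegaSubgroup hx),
      (QuotientGroup.eq_one_iff _).2 (pow_mem_omegaSubgroup hy), one_mul]
  rw [pow_succ', pow_mul]
  exact ((mem_omegaSubgroup_iff (hT.subgroupPow_top hpG hG)).1 hpow).2

end CommutatorOrders

section PowerfulPGroups

variable {p : ℕ} [Fact p.Prime] {G : Type*} [Group G] [Finite G]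

theorem torsionMulClosed_top (hpG : IsPGroup p G) (hG : IsOddPowerful p G) :
    TorsionMulClosed p (⊤ : Subgroup G) := by
  induction hcard : Nat.card G using Nat.strong_induction_on generalizing G with
  | h n ih =>
    refine torsionMulClosed_of_proper hpG hG fun H hH hHpow => .of_top ?_
    have hlt : Nat.card H < n := hcard ▸
      lt_of_le_of_ne H.card_le_card_group fun h => hH (H.eq_top_of_card_eq h)
    exact ih _ hlt (hpG.to_subgroup H) hHpow rfl

theorem commutatorBound (hpG : IsPGroup p G) (hG : IsOddPowerful p G) (i : ℕ) :
    CommutatorBound p G i :=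
  commutatorBound_of_proper hpG hG
    (fun H _ hH => (torsionMulClosed_top (hpG.to_subgroup H) hH).of_top) i

theorem mem_omegaSubgroup_subgroupPow_top_iff (hpG : IsPGroup p G) (hG : IsOddPowerful p G)
    {i m : ℕ} {x : G} : x ∈ omegaSubgroup p i (subgroupPow (⊤ : Subgroup G) (p ^ m)) ↔
      ∃ a : G, a ^ p ^ (m + i) = 1 ∧ a ^ p ^ m = x := by
  have hbot := exists_powSeries_eq_bot hpG
  rw [mem_omegaSubgroup_iff ((torsionMulClosed_top hpG hG).mono le_top),
    hG.subgroupPow_top_pow_eq_powSeries hbot]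
  simp only [pow_add, pow_mul]
  constructor
  · rintro ⟨hx, hxi⟩
    obtain ⟨a, rfl⟩ := hG.exists_pow_pow_eq hbot hx
    exact ⟨a, hxi, rfl⟩
  · rintro ⟨a, ha, rfl⟩
    exact ⟨pow_mem_powSeries_top p a m, ha⟩

theorem exists_pow_eq_commutatorElement (hpG : IsPGroup p G) (hG : IsOddPowerful p G)
    {i k l : ℕ} (hlk : l < k) (j : ℕ) {a b : G} (ha : a ^ p ^ (k + i) = 1)
    (hb : b ^ p ^ (l + i) = 1) :
    ∃ g : G, g ^ p ^ (k + i) = 1 ∧ g ^ p ^ (k + (j + l + 1)) = ⁅a ^ p ^ (k + j), b ^ p ^ l⁆ := by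
  obtain ⟨s, rfl⟩ := Nat.exists_eq_add_one_of_ne_zero hlk.ne_bot
  have hbound := commutatorBound hpG hG (s + i) (s + 1 + j) l a b
    (by rwa [show s + i + 1 = s + 1 + i by lia]) (pow_prime_pow_eq_one_mono (by lia) hb)
  rcases Nat.le_total i (j + l + 1) with hle | hle
  · rw [show s + i - (s + 1 + j) - l = 0 by lia, pow_zero, pow_one] at hbound
    exact ⟨1, one_pow _, by rw [one_pow, hbound]⟩
  · obtain ⟨g, hg⟩ := hG.exists_pow_pow_eq (exists_powSeries_eq_bot hpG)
      (hG.commutatorElement_mem_powSeries (pow_mem_powSeries_top p a (s + 1 + j))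
        (pow_mem_powSeries_top p b l))
    rw [← hg, ← pow_mul, ← pow_add] at hbound
    exact ⟨g, pow_prime_pow_eq_one_mono (by lia) hbound, by simpa only [add_assoc] using hg⟩

end PowerfulPGroups

theorem IsPowerful.isOddPowerful {p : ℕ} (hp : p.Prime) (hp2 : p ≠ 2) {G : Type*} [Group G]
    [Finite G] (hG : IsPGroup p G) (hpow : IsPowerful p G) : IsOddPowerful p G where
  odd := hp.odd_of_ne_two hp2
  isNilpotent := have : Fact p.Prime := ⟨hp⟩; hG.isNilpotent
  commutator_le := by rwa [IsPowerful, if_neg hp2] at hpow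

theorem omega_statement_7_general (p : ℕ) (hp : p.Prime) (hp2 : p ≠ 2) (G : Type*) [Group G]
    [Finite G] (hG : IsPGroup p G) (hpow : IsPowerful p G) (i j : ℕ) {k l : ℕ} (hlk : l < k) :
    ⁅subgroupPow (omegaSubgroup p i (subgroupPow (⊤ : Subgroup G) (p ^ k))) (p ^ j),
        omegaSubgroup p i (subgroupPow (⊤ : Subgroup G) (p ^ l))⁆ ≤
      subgroupPow (omegaSubgroup p i (subgroupPow (⊤ : Subgroup G) (p ^ k)))
        (p ^ (j + l + 1)) := by
  have : Fact p.Prime := ⟨hp⟩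
  have hodd := hpow.isOddPowerful hp hp2 hG
  refine closure_commutator_le ?_
  rintro _ ⟨z, hz, rfl⟩ y hy
  obtain ⟨a, ha, rfl⟩ := (mem_omegaSubgroup_subgroupPow_top_iff hG hodd).1 hz
  obtain ⟨b, hb, rfl⟩ := (mem_omegaSubgroup_subgroupPow_top_iff hG hodd).1 hy
  obtain ⟨g, hg, hgab⟩ := exists_pow_eq_commutatorElement hG hodd hlk j ha hb
  rw [← pow_mul, ← pow_add, ← hgab, pow_add p k, pow_mul]
  exact pow_mem_subgroupPow ((mem_omegaSubgroup_subgroupPow_top_iff hG hodd).2 ⟨g, hg, rfl⟩) _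

theorem omega_statement_7 (p : ℕ) (hp : p.Prime) (hp2 : p ≠ 2) (G : Type*) [Group G]
    [Finite G] (hG : IsPGroup p G) (hpow : IsPowerful p G) (i j : ℕ) (hi : 1 ≤ i) :
    ⁅subgroupPow (omegaSubgroup p i (subgroupPow (⊤ : Subgroup G) (p ^ 2))) (p ^ j),
        omegaSubgroup p i (subgroupPow (⊤ : Subgroup G) p)⁆ ≤
      subgroupPow (omegaSubgroup p i (subgroupPow (⊤ : Subgroup G) (p ^ 2)))
        (p ^ (j + 2)) := by
  simpa only [pow_one] using omega_statement_7_general p hp hp2 G hG hpow i j one_lt_two
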